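/- arXiv:2108.02990 — 2 statements merged into one kernel-verified Lean document; each statement's English description precedes it below -/
import Mathlib

section
/- Let n ≥ 0 be an integer and let a, b be real numbers with a > |b|. Then (1/π) ∫₀^π (a + b·cos x)^{−(n+1)} dx = (a² − b²)^{−(n+1)/2} · P_n( a / √(a² − b²) ), where P_n is the Legendre polynomial of degree n. -/
/-!
Write `s = √(a² - b²)`. The substitution `cos x = (a cos y - b) / (a - b cos y)` maps `[0, π]` onto
itself, with `a + b cos x = s² / (a - b cos y)` and `dx = s / (a - b cos y) dy`, so it turns the
integral of `(a + b cos x)^{-(n+1)}` into `s^{-(2n+1)}` times the integral of the polynomial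
`(a - b cos y)^n` (`integral_eq_integral_pow`).

For the latter, `a - b cos y = C |1 + D e^{iy}|²` with `C = (a + s) / 2` and `D = -b / (a + s)`.
Parseval's identity for the trigonometric polynomial `(1 + D e^{iy})^n`, whose coefficients are
`(n choose k) D^k`, gives `π C^n ∑ (n choose k)² D^{2k}` (`integral_normSq_pow`). Since
`C = (a + s) / 2` and `C D² = (a - s) / 2`, this is `π s^n P_n(a / s)`.
-/

open MeasureTheory Real

/-- Legendre polynomial of degree `n`. -/
noncomputable def legendreP (n : ℕ) (x : ℝ) : ℝ :=
  (1 / 2 ^ n) * ∑ k ∈ Finset.range (n + 1),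
    (n.choose k : ℝ) ^ 2 * (x - 1) ^ (n - k) * (x + 1) ^ k

lemma integral_cos_sub_mul (j k : ℕ) :
    ∫ y in (0 : ℝ)..π, Real.cos (j * y - k * y) = if j = k then π else 0 := by
  split_ifs with h
  · simp [h]
  · have hne : ((j : ℝ) - k) ≠ 0 := sub_ne_zero.mpr (by exact_mod_cast h)
    have hs : Real.sin (((j : ℝ) - k) * π) = 0 := by
      have := Real.sin_int_mul_pi ((j : ℤ) - k)
      push_cast at this
      exact this
    simp_rw [← sub_mul]
    rw [intervalIntegral.integral_comp_mul_left (fun x => Real.cos x) hne]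
    simp [hs]

/-- The expansion of `|(1 + D e^{iy})^n|²` as a double sum of cosines. -/
lemma normSq_pow_expansion (n : ℕ) (D y : ℝ) :
    (1 + D ^ 2 + 2 * D * Real.cos y) ^ n =
      ∑ j ∈ Finset.range (n + 1), ∑ k ∈ Finset.range (n + 1),
        ((n.choose j : ℝ) * D ^ j * ((n.choose k : ℝ) * D ^ k)) * Real.cos (j * y - k * y) := by
  have h1 : Complex.normSq (1 + D * Complex.exp (y * Complex.I)) =
      1 + D ^ 2 + 2 * D * Real.cos y := by
    rw [Complex.normSq_apply]
    simp [Complex.exp_ofReal_mul_I_re, Complex.exp_ofReal_mul_I_im]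
    linear_combination D ^ 2 * Real.sin_sq_add_cos_sq y
  have h2 : (1 + D * Complex.exp (y * Complex.I)) ^ n =
      ∑ j ∈ Finset.range (n + 1),
        (((n.choose j : ℝ) * D ^ j : ℝ) : ℂ) * Complex.exp (((j * y : ℝ) : ℂ) * Complex.I) := by
    rw [add_comm, add_pow]
    refine Finset.sum_congr rfl fun j _ => ?_
    rw [mul_pow, ← Complex.exp_nat_mul]
    push_cast
    rw [← mul_assoc (j : ℂ)]
    ring
  rw [← h1, ← map_pow, h2, Complex.normSq_apply, Complex.re_sum, Complex.im_sum]
  simp only [Complex.re_ofReal_mul, Complex.im_ofReal_mul, Complex.exp_ofReal_mul_I_re,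
    Complex.exp_ofReal_mul_I_im]
  rw [Finset.sum_mul_sum, Finset.sum_mul_sum, ← Finset.sum_add_distrib]
  refine Finset.sum_congr rfl fun j _ => ?_
  rw [← Finset.sum_add_distrib]
  refine Finset.sum_congr rfl fun k _ => ?_
  rw [Real.cos_sub]
  ring

/-- Parseval's identity for the trigonometric polynomial `(1 + D e^{iy})^n`. -/
lemma integral_normSq_pow (n : ℕ) (D : ℝ) :
    ∫ y in (0 : ℝ)..π, (1 + D ^ 2 + 2 * D * Real.cos y) ^ n =
      π * ∑ k ∈ Finset.range (n + 1), (n.choose k : ℝ) ^ 2 * (D ^ 2) ^ k := by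
  simp_rw [normSq_pow_expansion]
  rw [intervalIntegral.integral_finsetSum
    (fun j _ => (Continuous.intervalIntegrable (by fun_prop) _ _)), Finset.mul_sum]
  refine Finset.sum_congr rfl fun j hj => ?_
  rw [intervalIntegral.integral_finsetSum
    (fun k _ => (Continuous.intervalIntegrable (by fun_prop) _ _))]
  simp_rw [intervalIntegral.integral_const_mul, integral_cos_sub_mul]
  simp only [mul_ite, mul_zero, Finset.sum_ite_eq, hj, if_true]
  ring

lemma add_mul_cos_pos {a b : ℝ} (hab : |b| < a) (x : ℝ) : 0 < a + b * Real.cos x := by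
  have h : |b * Real.cos x| ≤ |b| := by
    rw [abs_mul]
    exact mul_le_of_le_one_right (abs_nonneg b) (Real.abs_cos_le_one x)
  linarith [neg_abs_le (b * Real.cos x)]

lemma sub_mul_cos_pos {a b : ℝ} (hab : |b| < a) (x : ℝ) : 0 < a - b * Real.cos x := by
  have := add_mul_cos_pos (b := -b) (by rwa [abs_neg]) x
  linarith

/-- The substitution `x = arccos ((a cos y - b) / (a - b cos y))`. -/
lemma integral_eq_integral_pow (n : ℕ) {a b s : ℝ} (hab : |b| < a) (hs : 0 < s)
    (hs2 : s ^ 2 = a ^ 2 - b ^ 2) :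
    ∫ x in (0 : ℝ)..π, (a + b * Real.cos x) ^ (-((n : ℤ) + 1)) =
      (s ^ (2 * n + 1))⁻¹ * ∫ y in (0 : ℝ)..π, (a - b * Real.cos y) ^ n := by
  have hq := sub_mul_cos_pos hab
  have hab' := abs_lt.mp hab
  have hq0 : ∀ y, a - b * Real.cos y ≠ 0 := fun y => (hq y).ne'
  set g : ℝ → ℝ := fun y => (a * Real.cos y - b) / (a - b * Real.cos y) with hg
  have hgsq : ∀ y, 1 - g y ^ 2 = (s * Real.sin y / (a - b * Real.cos y)) ^ 2 := by
    intro y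
    have := hq0 y
    simp only [hg]
    rw [div_pow, div_pow, mul_pow, hs2, Real.sin_sq, eq_div_iff (pow_ne_zero 2 this), sub_mul,
      div_mul_cancel₀ _ (pow_ne_zero 2 this)]
    ring
  have hgle : ∀ y, g y ^ 2 ≤ 1 := by
    intro y
    have := hgsq y
    nlinarith [sq_nonneg (s * Real.sin y / (a - b * Real.cos y))]
  have hcosf : ∀ y, Real.cos (Real.arccos (g y)) = g y := fun y =>
    Real.cos_arccos (neg_le_of_abs_le ((sq_le_one_iff_abs_le_one _).mp (hgle y)))
      (le_of_abs_le ((sq_le_one_iff_abs_le_one _).mp (hgle y)))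
  have hgc : Continuous g := by
    simp only [hg]
    exact Continuous.div (by fun_prop) (by fun_prop) hq0
  have hval : ∀ y, a + b * g y = s ^ 2 / (a - b * Real.cos y) := by
    intro y
    have := hq0 y
    simp only [hg]
    field_simp
    rw [hs2]
    ring
  have hf0 : Real.arccos (g 0) = 0 := by
    have : a - b ≠ 0 := by linarith
    simp [hg, this]
  have hfpi : Real.arccos (g π) = π := by
    have h : a + b ≠ 0 := by linarith
    have : g π = -1 := by
      simp only [hg, Real.cos_pi]
      rw [div_eq_iff (by simpa using h)]
      ring
    rw [this, Real.arccos_neg_one]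
  have hderiv : ∀ y ∈ Set.Ioo (min 0 π) (max 0 π),
      HasDerivWithinAt (fun y => Real.arccos (g y)) (s / (a - b * Real.cos y)) (Set.Ioi y) y := by
    intro y hy
    rw [min_eq_left Real.pi_pos.le, max_eq_right Real.pi_pos.le] at hy
    have hsin := Real.sin_pos_of_pos_of_lt_pi hy.1 hy.2
    have hpos : 0 < s * Real.sin y / (a - b * Real.cos y) := by
      have := hq y
      positivity
    have hlt : 0 < 1 - g y ^ 2 := by rw [hgsq]; positivity
    have hne1 : g y ≠ -1 := by
      intro h; rw [h] at hlt; norm_num at hlt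
    have hne2 : g y ≠ 1 := by
      intro h; rw [h] at hlt; norm_num at hlt
    have hg' : HasDerivAt g ((a * (-Real.sin y) * (a - b * Real.cos y) -
        (a * Real.cos y - b) * (-(b * (-Real.sin y)))) / (a - b * Real.cos y) ^ 2) y :=
      (((Real.hasDerivAt_cos y).const_mul a).sub_const b).div
        (((Real.hasDerivAt_cos y).const_mul b).const_sub a) (hq0 y)
    have := ((Real.hasDerivAt_arccos hne1 hne2).comp y hg').hasDerivWithinAt (s := Set.Ioi y)
    refine this.congr_deriv ?_
    rw [hgsq, Real.sqrt_sq hpos.le,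
      show a * -Real.sin y * (a - b * Real.cos y) -
        (a * Real.cos y - b) * -(b * -Real.sin y) = -(s ^ 2 * Real.sin y) by rw [hs2]; ring]
    have hqy := hq0 y
    generalize a - b * Real.cos y = q at hqy ⊢
    field_simp
  have key := intervalIntegral.integral_comp_mul_deriv'' (a := 0) (b := π)
    (f := fun y => Real.arccos (g y)) (f' := fun y => s / (a - b * Real.cos y))
    (g := fun x => (a + b * Real.cos x) ^ (-((n : ℤ) + 1)))
    (Real.continuous_arccos.comp hgc).continuousOn hderiv
    (Continuous.div (by fun_prop) (by fun_prop) hq0).continuousOn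
    (Continuous.zpow₀ (by fun_prop) _
      (fun x => Or.inl (add_mul_cos_pos hab x).ne')).continuousOn
  rw [hf0, hfpi] at key
  rw [← key, ← intervalIntegral.integral_const_mul]
  refine intervalIntegral.integral_congr fun y _ => ?_
  have := hq0 y
  simp only [Function.comp_apply, hcosf, hval]
  generalize a - b * Real.cos y = q at this ⊢
  rw [zpow_neg, show ((n : ℤ) + 1) = ((n + 1 : ℕ) : ℤ) by push_cast; rfl, zpow_natCast, div_pow, inv_div]
  field_simp
  ring

theorem stmt14 (n : ℕ) (a b : ℝ) (hab : |b| < a) :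
    (1 / π) * ∫ x in (0 : ℝ)..π, (a + b * Real.cos x) ^ (-((n : ℤ) + 1)) =
      (a ^ 2 - b ^ 2) ^ (-((n : ℝ) + 1) / 2) *
        legendreP n (a / Real.sqrt (a ^ 2 - b ^ 2)) := by
  have hab' := abs_lt.mp hab
  have ha : 0 < a := (abs_nonneg b).trans_lt hab
  have hpos : 0 < a ^ 2 - b ^ 2 := by nlinarith
  obtain ⟨s, hsdef⟩ : ∃ s, s = Real.sqrt (a ^ 2 - b ^ 2) := ⟨_, rfl⟩
  have hs : 0 < s := hsdef ▸ Real.sqrt_pos.mpr hpos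
  have hs2 : s ^ 2 = a ^ 2 - b ^ 2 := hsdef ▸ Real.sq_sqrt hpos.le
  have has : 0 < a + s := by positivity
  have hrpow : (a ^ 2 - b ^ 2) ^ (-((n : ℝ) + 1) / 2) = (s ^ (n + 1))⁻¹ := by
    rw [← hs2, ← Real.rpow_natCast s 2, ← Real.rpow_mul hs.le, ← Real.rpow_natCast,
      ← Real.rpow_neg hs.le]
    congr 1
    push_cast
    ring
  have hint : ∫ y in (0 : ℝ)..π, (a - b * Real.cos y) ^ n =
      ((a + s) / 2) ^ n * (π * ∑ k ∈ Finset.range (n + 1),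
        (n.choose k : ℝ) ^ 2 * ((-b / (a + s)) ^ 2) ^ k) := by
    rw [← integral_normSq_pow, ← intervalIntegral.integral_const_mul]
    refine intervalIntegral.integral_congr fun y _ => ?_
    rw [← mul_pow]
    congr 1
    field_simp
    linear_combination -hs2
  have hleg : legendreP n (a / s) = (s ^ n)⁻¹ * (((a + s) / 2) ^ n *
      ∑ k ∈ Finset.range (n + 1), (n.choose k : ℝ) ^ 2 * ((-b / (a + s)) ^ 2) ^ k) := by
    have hD : (-b / (a + s)) ^ 2 = (a - s) / (a + s) := by
      field_simp
      linear_combination hs2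
    rw [legendreP, hD, ← Finset.sum_range_reflect, Finset.mul_sum, Finset.mul_sum,
      Finset.mul_sum]
    refine Finset.sum_congr rfl fun k hk => ?_
    obtain ⟨m, rfl⟩ := Nat.exists_eq_add_of_le (Nat.lt_succ_iff.mp (Finset.mem_range.mp hk))
    rw [show k + m + 1 - 1 - k = m by omega, show k + m - m = k by omega,
      Nat.choose_symm_add, show a / s - 1 = (a - s) / s by field_simp,
      show a / s + 1 = (a + s) / s by field_simp]
    simp only [div_pow, pow_add]
    field_simp
  rw [← hsdef, hrpow, hleg, integral_eq_integral_pow n hab hs hs2, hint]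
  have := Real.pi_pos.ne'
  field_simp
  ring
end

section
/- Let P₁ ≥ 0 be an integer, P₂ > 0 a real number, α ∈ ℝ, and β ∈ ℝ with |β| < 1. Then ∫₀^π (1 + α·cos θ)^{P₁} (1 + β·cos θ)^{−P₂} dθ = (1−β)^{−P₂} · Σ_{q=0}^{P₁} C(P₁,q) · (2α)^q (1−α)^{P₁−q} · ( √π · Γ(q+1/2) / Γ(q+1) ) · ₂F₁( P₂, q+1/2; q+1; −2β/(1−β) ). Equivalently, the right-hand side equals (1−β)^{−P₂} Σ_{q=0}^{P₁} C(P₁,q) (2α)^q (1−α)^{P₁−q} ∫₀¹ t^{q−1/2} (1−t)^{−1/2} (1 + 2βt/(1−β))^{−P₂} dt. -/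
/-!
The substitution `t = (1 + cos θ) / 2` maps `(0, π)` bijectively onto `(0, 1)` and turns `dθ` into
`t ^ (-1/2) (1 - t) ^ (-1/2) dt`. With `1 + α cos θ = (1 - α) + 2 α t` and
`1 + β cos θ = (1 - β) (1 + 2 β t / (1 - β))`, the binomial theorem splits the left-hand side into
the Euler integrals of `integral_cos_eq_euler`. The normalising Gamma factors cancel because
`Γ(1/2) = √π` (`gamma_mul_twoF1`).
-/

open MeasureTheory Real

/-- Gauss hypergeometric function `₂F₁(a, b; c; z)` via Euler's integral representation. -/
noncomputable def twoF1 (a b c z : ℝ) : ℝ :=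
  (Real.Gamma c / (Real.Gamma b * Real.Gamma (c - b))) *
    ∫ t in (0 : ℝ)..1, t ^ (b - 1) * (1 - t) ^ (c - b - 1) * (1 - t * z) ^ (-a)

lemma image_half_one_add_cos :
    (fun θ : ℝ => (1 + Real.cos θ) / 2) '' Set.Ioo 0 π = Set.Ioo 0 1 := by
  ext t
  constructor
  · rintro ⟨θ, ⟨h0, h1⟩, rfl⟩
    have hs := Real.sin_pos_of_pos_of_lt_pi h0 h1
    have := Real.sin_sq_add_cos_sq θ
    constructor <;> dsimp only <;> nlinarith
  · rintro ⟨h0, h1⟩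
    refine ⟨Real.arccos (2 * t - 1), ⟨Real.arccos_pos.2 (by linarith), ?_⟩, ?_⟩
    · refine lt_of_le_of_ne (Real.arccos_le_pi _) fun h => ?_
      have := Real.arccos_eq_pi.1 h
      linarith
    · dsimp only
      rw [Real.cos_arccos (by linarith) (by linarith)]
      ring

/-- The change of variables `t = (1 + cos θ) / 2`. It needs no integrability of `g`. -/
lemma integral_half_one_add_cos (g : ℝ → ℝ) :
    ∫ t in (0 : ℝ)..1, t ^ (-(1 / 2) : ℝ) * (1 - t) ^ (-(1 / 2) : ℝ) * g t =
      ∫ θ in (0 : ℝ)..π, g ((1 + Real.cos θ) / 2) := by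
  rw [intervalIntegral.integral_of_le zero_le_one, intervalIntegral.integral_of_le Real.pi_pos.le,
    integral_Ioc_eq_integral_Ioo, integral_Ioc_eq_integral_Ioo, ← image_half_one_add_cos,
    integral_image_eq_integral_abs_deriv_smul (f' := fun θ => -Real.sin θ / 2) measurableSet_Ioo
      (fun θ _ => (((Real.hasDerivAt_cos θ).const_add 1).div_const 2).hasDerivWithinAt)]
  · refine setIntegral_congr_fun measurableSet_Ioo fun θ hθ => ?_
    have hs := Real.sin_pos_of_pos_of_lt_pi hθ.1 hθ.2
    have hsq := Real.sin_sq_add_cos_sq θ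
    have hp : 0 ≤ (1 + Real.cos θ) / 2 := by linarith [Real.neg_one_le_cos θ]
    have hm : 0 ≤ 1 - (1 + Real.cos θ) / 2 := by linarith [Real.cos_le_one θ]
    -- the weight is `(t (1 - t)) ^ (-1/2) = (sin θ / 2)⁻¹`, which cancels the Jacobian
    have key : ((1 + Real.cos θ) / 2) ^ (-(1 / 2) : ℝ) *
        (1 - (1 + Real.cos θ) / 2) ^ (-(1 / 2) : ℝ) = (Real.sin θ / 2)⁻¹ := by
      rw [← Real.mul_rpow hp hm, show (1 + Real.cos θ) / 2 * (1 - (1 + Real.cos θ) / 2) =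
        (Real.sin θ / 2) ^ 2 by nlinarith, Real.rpow_neg (sq_nonneg _), ← Real.sqrt_eq_rpow,
        Real.sqrt_sq (by positivity)]
    simp only [smul_eq_mul]
    rw [key, abs_div, abs_neg, abs_of_pos hs, abs_two]
    field_simp
  · intro x hx y hy hxy
    exact Real.injOn_cos ⟨hx.1.le, hx.2.le⟩ ⟨hy.1.le, hy.2.le⟩ (by dsimp only at hxy; linarith)

/-- The Gamma factors of the formula are exactly the inverse of the normalisation in `twoF1`. -/
lemma gamma_mul_twoF1 (q : ℕ) (P₂ β : ℝ) :
    (Real.sqrt π * Real.Gamma (q + 1 / 2) / Real.Gamma (q + 1)) *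
        twoF1 P₂ (q + 1 / 2) (q + 1) (-(2 * β) / (1 - β)) =
      ∫ t in (0 : ℝ)..1, t ^ ((q : ℝ) - 1 / 2) * (1 - t) ^ (-(1 / 2) : ℝ) *
          (1 + 2 * β * t / (1 - β)) ^ (-P₂) := by
  have h1 : Real.Gamma ((q : ℝ) + 1 / 2) ≠ 0 := (Real.Gamma_pos_of_pos (by positivity)).ne'
  have h2 : Real.Gamma ((q : ℝ) + 1) ≠ 0 := (Real.Gamma_pos_of_pos (by positivity)).ne'
  have h3 : Real.sqrt π ≠ 0 := (Real.sqrt_pos.2 Real.pi_pos).ne'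
  have hc : (q : ℝ) + 1 - (q + 1 / 2) = 1 / 2 := by ring
  have hb : (q : ℝ) + 1 / 2 - 1 = q - 1 / 2 := by ring
  have hd : (1 / 2 : ℝ) - 1 = -(1 / 2) := by ring
  have hz (t : ℝ) : 1 - t * (-(2 * β) / (1 - β)) = 1 + 2 * β * t / (1 - β) := by ring
  simp only [twoF1, hc, hb, hd, hz, Real.Gamma_one_half_eq]
  rw [← mul_assoc]
  convert one_mul _ using 2
  field_simp

/-- Each Euler integral, scaled by `(1 - β) ^ (-P₂)`, is the trigonometric integral of
`t ^ q (1 + β cos θ) ^ (-P₂)` with `t = (1 + cos θ) / 2`. -/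
lemma integral_cos_eq_euler (q : ℕ) (P₂ β : ℝ) (hβ : |β| < 1) :
    (1 - β) ^ (-P₂) * ∫ t in (0 : ℝ)..1, t ^ ((q : ℝ) - 1 / 2) * (1 - t) ^ (-(1 / 2) : ℝ) *
          (1 + 2 * β * t / (1 - β)) ^ (-P₂) =
      ∫ θ in (0 : ℝ)..π, ((1 + Real.cos θ) / 2) ^ q * (1 + β * Real.cos θ) ^ (-P₂) := by
  obtain ⟨hl, hu⟩ := abs_lt.1 hβ
  have hb : 0 < 1 - β := by linarith
  have := integral_half_one_add_cos fun t => t ^ q * (1 + β * (2 * t - 1)) ^ (-P₂)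
  have e (θ : ℝ) : 2 * ((1 + Real.cos θ) / 2) - 1 = Real.cos θ := by ring
  simp only [e] at this
  rw [← this, ← intervalIntegral.integral_const_mul,
    intervalIntegral.integral_of_le zero_le_one, intervalIntegral.integral_of_le zero_le_one,
    integral_Ioc_eq_integral_Ioo, integral_Ioc_eq_integral_Ioo]
  refine setIntegral_congr_fun measurableSet_Ioo fun t ht => ?_
  obtain ⟨h0, h1⟩ := ht
  have hf : 1 + β * (2 * t - 1) = (1 - β) * (1 + 2 * β * t / (1 - β)) := by
    field_simp
    ring
  have hpos : 0 < 1 + β * (2 * t - 1) := by nlinarith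
  have hpos' : 0 < 1 + 2 * β * t / (1 - β) := by
    rw [hf] at hpos
    exact pos_of_mul_pos_right hpos hb.le
  rw [hf, Real.mul_rpow hb.le hpos'.le, sub_eq_add_neg (q : ℝ), Real.rpow_add h0,
    Real.rpow_natCast]
  ring

theorem stmt15 (P₁ : ℕ) (P₂ α β : ℝ) (hP₂ : 0 < P₂) (hβ : |β| < 1) :
    (∫ θ in (0 : ℝ)..π, (1 + α * Real.cos θ) ^ P₁ * (1 + β * Real.cos θ) ^ (-P₂) =
      (1 - β) ^ (-P₂) * ∑ q ∈ Finset.range (P₁ + 1), (P₁.choose q : ℝ) *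
        (2 * α) ^ q * (1 - α) ^ (P₁ - q) *
        (Real.sqrt π * Real.Gamma (q + 1 / 2) / Real.Gamma (q + 1)) *
        twoF1 P₂ (q + 1 / 2) (q + 1) (-(2 * β) / (1 - β))) ∧
    (1 - β) ^ (-P₂) * ∑ q ∈ Finset.range (P₁ + 1), (P₁.choose q : ℝ) *
        (2 * α) ^ q * (1 - α) ^ (P₁ - q) *
        (Real.sqrt π * Real.Gamma (q + 1 / 2) / Real.Gamma (q + 1)) *
        twoF1 P₂ (q + 1 / 2) (q + 1) (-(2 * β) / (1 - β)) =
      (1 - β) ^ (-P₂) * ∑ q ∈ Finset.range (P₁ + 1), (P₁.choose q : ℝ) *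
        (2 * α) ^ q * (1 - α) ^ (P₁ - q) *
        ∫ t in (0 : ℝ)..1, t ^ ((q : ℝ) - 1 / 2) * (1 - t) ^ (-(1 / 2) : ℝ) *
          (1 + 2 * β * t / (1 - β)) ^ (-P₂) := by
  have hs (q : ℕ) : (P₁.choose q : ℝ) * (2 * α) ^ q * (1 - α) ^ (P₁ - q) *
        (Real.sqrt π * Real.Gamma (q + 1 / 2) / Real.Gamma (q + 1)) *
        twoF1 P₂ (q + 1 / 2) (q + 1) (-(2 * β) / (1 - β)) =
      (P₁.choose q : ℝ) * (2 * α) ^ q * (1 - α) ^ (P₁ - q) *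
        ∫ t in (0 : ℝ)..1, t ^ ((q : ℝ) - 1 / 2) * (1 - t) ^ (-(1 / 2) : ℝ) *
          (1 + 2 * β * t / (1 - β)) ^ (-P₂) := by
    rw [mul_assoc, gamma_mul_twoF1]
  simp only [hs, and_true]
  have hpos (θ : ℝ) : 1 + β * Real.cos θ ≠ 0 := by
    have h : |β * Real.cos θ| < 1 := by
      rw [abs_mul]
      exact (mul_le_of_le_one_right (abs_nonneg _) (Real.abs_cos_le_one θ)).trans_lt hβ
    linarith [(abs_lt.1 h).1]
  have hc : Continuous fun θ : ℝ => (1 + β * Real.cos θ) ^ (-P₂) :=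
    Continuous.rpow_const (by fun_prop) fun θ => Or.inl (hpos θ)
  rw [Finset.mul_sum]
  simp_rw [mul_left_comm ((1 - β) ^ (-P₂)), integral_cos_eq_euler _ P₂ β hβ,
    ← intervalIntegral.integral_const_mul]
  rw [← intervalIntegral.integral_finsetSum fun q _ =>
    Continuous.intervalIntegrable (by fun_prop) _ _]
  refine intervalIntegral.integral_congr fun θ _ => ?_
  rw [show 1 + α * Real.cos θ = 2 * α * ((1 + Real.cos θ) / 2) + (1 - α) by ring, add_pow,
    Finset.sum_mul]
  refine Finset.sum_congr rfl fun q _ => ?_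
  rw [mul_pow (2 * α)]
  ring
end
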